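/- arXiv:1602.05843 — 2 statements merged into one kernel-verified Lean document; each statement's English description precedes it below -/
import Mathlib

section
/- Let R = k[x^d, x^e y^ℓ, x^f y^m, y^n] with d,n>0, e,f,ℓ,m ≥ 0, (e,ℓ) ≠ (0,0). Then R is Cohen–Macaulay if and only if g_2 ≥ 0 and h_2 ≥ 0, where -a_2(e,ℓ) + b_2(f,m) = (g_2,h_2) is the minimal relation of the four-generator setup. -/
open MvPolynomial

set_option synthInstance.maxHeartbeats 1000000
set_option maxHeartbeats 2000000

/-!
The ring `R` is the semigroup ring `k[S]` of the semigroup `S ⊆ ℕ²` generated by the four exponents,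
and `x^d, y^n` is a regular sequence on it exactly when `s + (d, 0) ∈ S` and `s + (0, n) ∈ S` force
`s ∈ S`; equivalently, when `S` contains the meet of any two of its elements that are congruent
modulo `H = dℤ ⊕ nℤ`.

Let `r = b w - a v` be the minimal relation between `v = (e, ℓ)` and `w = (f, m)`. If `0 ≤ r`, every
element of `S` can be written `i v + j w + h` with `i < ord v`, `j < b` and `0 ≤ h ∈ H`, and
minimality of `b` makes `i v + j w` and `i' v + j' w` comparable whenever they are congruent; the
smaller one then witnesses that the meet is in `S`. Conversely, suppose `0 ≤ r` fails, so that the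
meet of `b w` and `a v` is strictly below both. If it were in `S`, say equal to `i v + j w + h`,
minimality of `b` would force `j = 0`, hence `i = a`, and `a v` would lie below the meet.
-/

open RingTheory.Sequence Pointwise

section RegularSequence

variable {A B : Type*} [CommRing A]

theorem isWeaklyRegular_pair_iff {x y : A} :
    IsWeaklyRegular A [x, y] ↔ IsLeftRegular x ∧ ∀ r, x ∣ y * r → x ∣ r := by
  have mem_smul_top (r : A) : r ∈ x • (⊤ : Submodule A A) ↔ x ∣ r := by
    simp [Submodule.mem_smul_pointwise_iff_exists, dvd_def, eq_comm]
  rw [isWeaklyRegular_cons_iff, isWeaklyRegular_singleton_iff,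
    isSMulRegular_quotient_iff_mem_of_smul_mem]
  simp only [mem_smul_top, smul_eq_mul]
  rfl

theorem isRegular_iff_isWeaklyRegular_of_map_eq_zero [CommRing B] [Nontrivial B] (φ : A →+* B)
    {rs : List A} (hφ : ∀ r ∈ rs, φ r = 0) : IsRegular A rs ↔ IsWeaklyRegular A rs := by
  refine ⟨IsRegular.toIsWeaklyRegular, fun h => ⟨h, fun htop => ?_⟩⟩
  have hker : Ideal.ofList rs ≤ RingHom.ker φ := Ideal.span_le.mpr hφ
  rw [smul_eq_mul, Ideal.mul_top] at htop
  exact RingHom.ker_ne_top φ (top_le_iff.mp (htop.trans_le hker))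

end RegularSequence

section PairSaturated

variable {M : Type*} [AddCommMonoid M] {S : AddSubmonoid M} {a b : M}

/-- Closedness of `S` under cancelling `a` and `b` simultaneously: for disjoint nonzero exponents
`a` and `b` in `S` it says that `x ^ a, x ^ b` is a regular sequence on the semigroup ring of `S`.
-/
def PairSaturated (S : AddSubmonoid M) (a b : M) : Prop :=
  ∀ s, s + a ∈ S → s + b ∈ S → s ∈ S

namespace PairSaturated

theorem mem_of_add_mem_of_add_nsmul_mem (hS : PairSaturated S a b) (hb : b ∈ S)
    {s : M} {q : ℕ} (hsa : s + a ∈ S) (hsb : s + q • b ∈ S) : s ∈ S := by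
  induction q generalizing s with
  | zero => simpa using hsb
  | succ q ih =>
    refine hS s hsa (ih ?_ ?_)
    · exact add_right_comm s a b ▸ add_mem hsa hb
    · rwa [add_assoc, ← succ_nsmul']

theorem mem_of_add_nsmul_mem (hS : PairSaturated S a b) (ha : a ∈ S) (hb : b ∈ S)
    {s : M} {p q : ℕ} (hsa : s + p • a ∈ S) (hsb : s + q • b ∈ S) : s ∈ S := by
  induction p generalizing s with
  | zero => simpa using hsa
  | succ p ih =>
    refine hS.mem_of_add_mem_of_add_nsmul_mem hb (ih ?_ ?_) hsb
    · rwa [add_assoc, ← succ_nsmul']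
    · exact add_right_comm s (q • b) a ▸ add_mem hsb ha

end PairSaturated

end PairSaturated

section MonomialSubalgebra

variable {σ k : Type*}

theorem monomial_one_dvd_monomial_one_mul_iff [CommSemiring k] {a b : σ →₀ ℕ} (hab : Disjoint a b)
    {p : MvPolynomial σ k} : monomial a 1 ∣ monomial b 1 * p ↔ monomial a 1 ∣ p := by
  refine ⟨fun h => ?_, fun h => h.mul_left _⟩
  rw [monomial_one_dvd_iff_modMonomial_eq_zero] at h ⊢
  ext s
  by_cases has : a ≤ s
  · rw [coeff_modMonomial_of_le _ has, coeff_zero]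
  have habs : ¬a ≤ b + s := fun hle => has fun i => by
    have hi : min (a i) (b i) = 0 := DFunLike.congr_fun hab.eq_bot i
    have hlei : a i ≤ b i + s i := hle i
    omega
  rw [coeff_modMonomial_of_not_le _ has, ← one_mul (coeff s p), ← coeff_monomial_mul,
    ← coeff_modMonomial_of_not_le _ habs, h, coeff_zero, coeff_zero]

variable (k) in
/-- The semigroup ring `k[S]`, encoded as the polynomials all of whose exponents lie in `S`. -/
noncomputable def monomialSubalgebra [CommSemiring k] (S : AddSubmonoid (σ →₀ ℕ)) :
    Subalgebra k (MvPolynomial σ k) :=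
  (restrictSupport k (S : Set (σ →₀ ℕ))).toSubalgebra
    (by rw [← C_1, C_apply, monomial_mem_restrictSupport]; exact .inl S.zero_mem)
    fun p q hp hq => by
      rw [← S.coe_add_self_eq, restrictSupport_add]
      exact Submodule.mul_mem_mul hp hq

theorem mem_monomialSubalgebra [CommSemiring k] {S : AddSubmonoid (σ →₀ ℕ)} {p : MvPolynomial σ k} :
    p ∈ monomialSubalgebra k S ↔ ∀ s, coeff s p ≠ 0 → s ∈ S := by
  simp [monomialSubalgebra, Submodule.mem_toSubalgebra, mem_restrictSupport_iff, Set.subset_def]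

theorem monomial_one_mem_monomialSubalgebra [CommSemiring k] [Nontrivial k]
    {S : AddSubmonoid (σ →₀ ℕ)} {s : σ →₀ ℕ} :
    monomial s 1 ∈ monomialSubalgebra k S ↔ s ∈ S := by
  simp [monomialSubalgebra, Submodule.mem_toSubalgebra]

theorem monomial_one_mul_mem_monomialSubalgebra [CommSemiring k] {S : AddSubmonoid (σ →₀ ℕ)}
    {a : σ →₀ ℕ} {p : MvPolynomial σ k} :
    monomial a 1 * p ∈ monomialSubalgebra k S ↔ ∀ s, coeff s p ≠ 0 → s + a ∈ S := by
  simp only [mem_monomialSubalgebra, coeff_monomial_mul', one_mul]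
  refine ⟨fun h s hs => h (s + a) (by simpa), fun h u hu => ?_⟩
  rw [ite_ne_right_iff] at hu
  simpa [tsub_add_cancel_of_le hu.1] using h _ hu.2

theorem adjoin_monomial_one_image [CommSemiring k] (E : Set (σ →₀ ℕ)) :
    Algebra.adjoin k ((monomial · (1 : k)) '' E) = monomialSubalgebra k (.closure E) := by
  have monomial_mem (s : σ →₀ ℕ) (hs : s ∈ AddSubmonoid.closure E) :
      monomial s 1 ∈ Algebra.adjoin k ((monomial · (1 : k)) '' E) := by
    induction hs using AddSubmonoid.closure_induction with
    | mem s hs => exact Algebra.subset_adjoin ⟨s, hs, rfl⟩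
    | zero => exact one_mem _
    | add s t _ _ hs ht => simpa [monomial_mul] using mul_mem hs ht
  apply le_antisymm
  · rw [Algebra.adjoin_le_iff, Set.image_subset_iff]
    exact fun s hs => (monomial_mem_restrictSupport k).mpr (.inl (AddSubmonoid.subset_closure hs))
  · rw [← Subalgebra.toSubmodule.le_iff_le, monomialSubalgebra, Submodule.toSubalgebra_toSubmodule,
      restrictSupport_eq_span, Submodule.span_le, Set.image_subset_iff]
    exact monomial_mem

theorem isRegular_monomial_pair_iff [CommRing k] [Nontrivial k] {S : AddSubmonoid (σ →₀ ℕ)}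
    {a b : σ →₀ ℕ} (ha : a ≠ 0) (hb : b ≠ 0) (hab : Disjoint a b) {x y : monomialSubalgebra k S}
    (hx : (x : MvPolynomial σ k) = monomial a 1) (hy : (y : MvPolynomial σ k) = monomial b 1) :
    IsRegular (monomialSubalgebra k S) [x, y] ↔ PairSaturated S a b := by
  classical
  have dvd_iff {r : monomialSubalgebra k S} : x ∣ r ↔ ∃ p ∈ monomialSubalgebra k S,
      (r : MvPolynomial σ k) = monomial a 1 * p := by
    simp [dvd_def, Subtype.ext_iff, hx]
  rw [isRegular_iff_isWeaklyRegular_of_map_eq_zero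
      (constantCoeff.comp (monomialSubalgebra k S).val.toRingHom)
      (by simp [hx, hy, constantCoeff_monomial, ha, hb]),
    isWeaklyRegular_pair_iff, and_iff_right]
  · simp only [dvd_iff, MulMemClass.coe_mul, hy]
    refine ⟨fun h s hsa hsb => ?_, fun h r => ?_⟩
    · obtain ⟨p, hp, hsp⟩ := h ⟨monomial (s + a) 1, monomial_one_mem_monomialSubalgebra.mpr hsa⟩
        ⟨monomial (s + b) 1, monomial_one_mem_monomialSubalgebra.mpr hsb, by
          simp only [monomial_mul, one_mul]; congr 2; abel⟩
      obtain rfl : monomial s 1 = p := by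
        rw [← monomial_one_mul_cancel_left_iff (m := a), ← hsp, monomial_mul, one_mul, add_comm]
      exact monomial_one_mem_monomialSubalgebra.mp hp
    · rintro ⟨q, hq, hrq⟩
      obtain ⟨p, hp⟩ := (monomial_one_dvd_monomial_one_mul_iff hab).mp ⟨q, hrq⟩
      obtain rfl : q = monomial b 1 * p := by
        rwa [hp, mul_left_comm, monomial_one_mul_cancel_left_iff, eq_comm] at hrq
      have hr : monomial a 1 * p ∈ monomialSubalgebra k S := hp ▸ r.2
      rw [monomial_one_mul_mem_monomialSubalgebra] at hq hr
      exact ⟨p, mem_monomialSubalgebra.mpr fun s hs => h s (hr s hs) (hq s hs), hp⟩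
  · intro p q hpq
    have hcoe := congrArg Subtype.val hpq
    simp only [MulMemClass.coe_mul, hx, monomial_one_mul_cancel_left_iff] at hcoe
    exact Subtype.ext hcoe

end MonomialSubalgebra

section LatticeGroup

variable {G : Type*} [AddCommGroup G]

/-- `S` contains the meet of any two of its elements that are congruent modulo `H`. -/
def InfClosedMod [SemilatticeInf G] (S : AddSubmonoid G) (H : AddSubgroup G) : Prop :=
  ∀ s ∈ S, ∀ t ∈ S, s - t ∈ H → s ⊓ t ∈ S

/-- The semigroup generated by `v`, `w` and the nonnegative elements of `H`. -/
def positiveSemigroup [PartialOrder G] [IsOrderedAddMonoid G] (H : AddSubgroup G) (v w : G) :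
    AddSubmonoid G :=
  .closure {v, w} ⊔ H.toAddSubmonoid ⊓ .nonneg G

/-- A relation `b w - a v ∈ H`, with `0 < b` and `a` smaller than the order of `v` modulo `H`,
which is not negative. For the componentwise order on `ℤ × ℤ` the last condition on `(g, h)` reads
`0 < g ∨ 0 < h ∨ (g, h) = (0, 0)`. -/
structure IsAdmissibleRelation [LT G] (H : AddSubgroup G) (v w : G) (a b : ℕ) : Prop where
  pos : 0 < b
  lt_addOrderOf : a < addOrderOf (v : G ⧸ H)
  mem : b • w - a • v ∈ H
  not_neg : ¬b • w - a • v < 0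

/-- An admissible relation whose `w`-coefficient is smallest. -/
structure IsMinimalRelation [LT G] (H : AddSubgroup G) (v w : G) (a b : ℕ) : Prop
    extends IsAdmissibleRelation H v w a b where
  le_of_isAdmissible : ∀ {a' b' : ℕ}, IsAdmissibleRelation H v w a' b' → b ≤ b'

variable {H : AddSubgroup G} {v w : G} {a b : ℕ}

theorem eq_of_nsmul_sub_nsmul_mem {i i' : ℕ} (hi : i < addOrderOf (v : G ⧸ H))
    (hi' : i' < addOrderOf (v : G ⧸ H)) (hmem : i • v - i' • v ∈ H) : i = i' :=
  nsmul_injOn_Iio_addOrderOf hi hi' (QuotientAddGroup.eq_iff_sub_mem.mpr hmem)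

theorem IsAdmissibleRelation.addOrderOf_pos [LT G] (hab : IsAdmissibleRelation H v w a b) :
    0 < addOrderOf (v : G ⧸ H) :=
  hab.lt_addOrderOf.trans_le' a.zero_le

theorem inf_sub_mem_of_sub_mem [Lattice G] [IsOrderedAddMonoid G] (hH : ∀ g ∈ H, g⁺ ∈ H) {s t : G}
    (hst : s - t ∈ H) : s ⊓ t - s ∈ H := by
  simpa [inf_eq_sub_posPart_sub] using hH _ hst

section PartialOrder

variable [PartialOrder G] [IsOrderedAddMonoid G]

theorem mem_positiveSemigroup {x : G} :
    x ∈ positiveSemigroup H v w ↔ ∃ i j : ℕ, ∃ h ∈ H, 0 ≤ h ∧ i • v + j • w + h = x := by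
  simp [positiveSemigroup, AddSubmonoid.mem_sup, AddSubmonoid.mem_closure_pair, and_assoc]

theorem mem_positiveSemigroup_of_sub_mem {c x : G} (hc : c ∈ positiveSemigroup H v w)
    (hmem : x - c ∈ H) (hle : c ≤ x) : x ∈ positiveSemigroup H v w := by
  obtain ⟨i, j, h, hh, hh0, rfl⟩ := mem_positiveSemigroup.mp hc
  exact mem_positiveSemigroup.mpr
    ⟨i, j, _, add_mem hh hmem, add_nonneg hh0 (sub_nonneg.mpr hle), by abel⟩

theorem exists_lt_addOrderOf_nsmul_eq (hv : 0 ≤ v) (hfin : 0 < addOrderOf (v : G ⧸ H)) (i : ℕ) :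
    ∃ i' < addOrderOf (v : G ⧸ H), ∃ h ∈ H, 0 ≤ h ∧ i • v = i' • v + h := by
  set N := addOrderOf (v : G ⧸ H)
  have hN : N • v ∈ H := by
    rw [← QuotientAddGroup.eq_zero_iff]
    exact addOrderOf_nsmul_eq_zero (v : G ⧸ H)
  refine ⟨i % N, i.mod_lt hfin, (i / N) • N • v, nsmul_mem hN _, by positivity, ?_⟩
  rw [smul_smul, ← add_smul, Nat.mod_add_div']

theorem exists_lt_addOrderOf_of_mem_positiveSemigroup (hv : 0 ≤ v)
    (hfin : 0 < addOrderOf (v : G ⧸ H)) {x : G} (hx : x ∈ positiveSemigroup H v w) :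
    ∃ i < addOrderOf (v : G ⧸ H), ∃ j : ℕ, ∃ h ∈ H, 0 ≤ h ∧ i • v + j • w + h = x := by
  obtain ⟨i, j, h, hh, hh0, rfl⟩ := mem_positiveSemigroup.mp hx
  obtain ⟨i', hi', h', hh', hh0', heq⟩ := exists_lt_addOrderOf_nsmul_eq hv hfin i
  exact ⟨i', hi', j, h' + h, add_mem hh' hh, add_nonneg hh0' hh0, by rw [heq]; abel⟩

namespace IsMinimalRelation

theorem exists_lt_of_mem_positiveSemigroup (hmin : IsMinimalRelation H v w a b) (hv : 0 ≤ v)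
    (hr : 0 ≤ b • w - a • v) {x : G} (hx : x ∈ positiveSemigroup H v w) :
    ∃ i < addOrderOf (v : G ⧸ H), ∃ j < b, ∃ h ∈ H, 0 ≤ h ∧ i • v + j • w + h = x := by
  obtain ⟨i, j, h, hh, hh0, rfl⟩ := mem_positiveSemigroup.mp hx
  obtain ⟨i', hi', h', hh', hh0', heq⟩ := exists_lt_addOrderOf_nsmul_eq hv hmin.addOrderOf_pos
    (i + j / b * a)
  refine ⟨i', hi', j % b, j.mod_lt hmin.pos, h' + (j / b) • (b • w - a • v) + h,
    add_mem (add_mem hh' (nsmul_mem hmin.mem _)) hh, by positivity, ?_⟩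
  have hj : j • w = (j % b) • w + (j / b) • b • w := by
    rw [smul_smul, ← add_smul, Nat.mod_add_div']
  calc i' • v + (j % b) • w + (h' + (j / b) • (b • w - a • v) + h)
      = (i' • v + h') + (j % b) • w + (j / b) • (b • w - a • v) + h := by abel
    _ = (i • v + (j / b) • a • v) + (j % b) • w + (j / b) • (b • w - a • v) + h := by
      rw [← heq, add_smul, mul_smul]
    _ = i • v + ((j % b) • w + (j / b) • b • w) + h := by rw [smul_sub]; abel
    _ = i • v + j • w + h := by rw [← hj]

theorem le_total_of_sub_mem (hmin : IsMinimalRelation H v w a b) (hv : 0 ≤ v) (hw : 0 ≤ w)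
    {i i' j j' : ℕ} (hi : i < addOrderOf (v : G ⧸ H)) (hi' : i' < addOrderOf (v : G ⧸ H))
    (hj : j < b) (hj' : j' < b) (hmem : i • v + j • w - (i' • v + j' • w) ∈ H) :
    i • v + j • w ≤ i' • v + j' • w ∨ i' • v + j' • w ≤ i • v + j • w := by
  wlog hjj : j' ≤ j generalizing i i' j j'
  · exact (this hi' hi hj' hj (by simpa using neg_mem hmem) (le_of_not_ge hjj)).symm
  rcases le_or_gt i' i with hii | hii
  · right; gcongr
  rcases hjj.eq_or_lt with rfl | hjj
  · left; gcongr
  left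
  have hsub : (j - j') • w - (i' - i) • v = i • v + j • w - (i' • v + j' • w) := by
    rw [sub_nsmul _ hjj.le, sub_nsmul _ hii.le]
    abel
  by_contra hle
  have hadm : IsAdmissibleRelation H v w (i' - i) (j - j') :=
    ⟨by omega, by omega, hsub ▸ hmem, fun hneg => hle (sub_neg.mp (hsub ▸ hneg)).le⟩
  have := hmin.le_of_isAdmissible hadm
  omega

theorem eq_zero_of_lt (hmin : IsMinimalRelation H v w a b) (hv : 0 ≤ v) (hw : 0 ≤ w) {i j : ℕ}
    (hi : i < addOrderOf (v : G ⧸ H)) (hlt : i • v + j • w < b • w)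
    (hmem : b • w - (i • v + j • w) ∈ H) : j = 0 := by
  have hjb : j < b := by
    by_contra! hbj
    exact hlt.not_ge ((nsmul_le_nsmul_left hw hbj).trans (le_add_of_nonneg_left (by positivity)))
  have hsub : (b - j) • w - i • v = b • w - (i • v + j • w) := by
    rw [sub_nsmul _ hjb.le]
    abel
  have hadm : IsAdmissibleRelation H v w i (b - j) :=
    ⟨by omega, hi, hsub ▸ hmem, hsub ▸ (sub_pos.mpr hlt).not_gt⟩
  have := hmin.le_of_isAdmissible hadm
  omega

end IsMinimalRelation

end PartialOrder

namespace IsMinimalRelation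

variable [Lattice G] [IsOrderedAddMonoid G]

theorem infClosedMod_of_nonneg (hmin : IsMinimalRelation H v w a b) (hH : ∀ g ∈ H, g⁺ ∈ H)
    (hv : 0 ≤ v) (hw : 0 ≤ w) (hr : 0 ≤ b • w - a • v) :
    InfClosedMod (positiveSemigroup H v w) H := by
  intro s hs t ht hst
  obtain ⟨i, hi, j, hj, h, hh, hh0, hs⟩ := hmin.exists_lt_of_mem_positiveSemigroup hv hr hs
  obtain ⟨i', hi', j', hj', h', hh', hh0', ht⟩ := hmin.exists_lt_of_mem_positiveSemigroup hv hr ht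
  have inf_mem {p q : ℕ} (hpq : s - (p • v + q • w) ∈ H) (hs : p • v + q • w ≤ s)
      (ht : p • v + q • w ≤ t) : s ⊓ t ∈ positiveSemigroup H v w := by
    refine mem_positiveSemigroup_of_sub_mem
      (mem_positiveSemigroup.mpr ⟨p, q, 0, zero_mem H, le_rfl, add_zero _⟩) ?_ (le_inf hs ht)
    simpa using add_mem (inf_sub_mem_of_sub_mem hH hst) hpq
  have hsub : s - (i • v + j • w) ∈ H := by rwa [← hs, add_sub_cancel_left]
  have hsub' : s - (i' • v + j' • w) ∈ H := by
    rw [← sub_add_sub_cancel s t, ← ht, add_sub_cancel_left, ht]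
    exact add_mem hst hh'
  have hle : i • v + j • w ≤ s := hs ▸ le_add_of_nonneg_right hh0
  have hle' : i' • v + j' • w ≤ t := ht ▸ le_add_of_nonneg_right hh0'
  rcases hmin.le_total_of_sub_mem hv hw hi hi' hj hj' (by simpa using sub_mem hsub' hsub) with
    hcomp | hcomp
  · exact inf_mem hsub hle (hcomp.trans hle')
  · exact inf_mem hsub' (hcomp.trans hle) hle'

theorem nonneg_of_infClosedMod (hmin : IsMinimalRelation H v w a b) (hH : ∀ g ∈ H, g⁺ ∈ H)
    (hv : 0 ≤ v) (hw : 0 ≤ w) (hS : InfClosedMod (positiveSemigroup H v w) H) :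
    0 ≤ b • w - a • v := by
  by_contra hr
  set m := b • w ⊓ a • v
  have hmw : m < b • w := inf_lt_left.mpr fun hle =>
    hmin.not_neg (lt_of_le_of_ne (sub_nonpos.mpr hle) fun h0 => hr h0.ge)
  have hmv : m < a • v := inf_lt_right.mpr fun hle => hr (sub_nonneg.mpr hle)
  have hmS : m ∈ positiveSemigroup H v w :=
    hS _ (mem_positiveSemigroup.mpr ⟨0, b, 0, zero_mem H, le_rfl, by simp⟩)
      _ (mem_positiveSemigroup.mpr ⟨a, 0, 0, zero_mem H, le_rfl, by simp⟩) hmin.mem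
  obtain ⟨i, hi, j, h, hh, hh0, hm⟩ :=
    exists_lt_addOrderOf_of_mem_positiveSemigroup hv hmin.addOrderOf_pos hmS
  have hle : i • v + j • w ≤ m := hm ▸ le_add_of_nonneg_right hh0
  have hmemw : b • w - (i • v + j • w) ∈ H := by
    have hmwH : b • w - m ∈ H := by
      simpa using neg_mem (inf_sub_mem_of_sub_mem hH hmin.mem)
    have : b • w - (i • v + j • w) = b • w - m + h := by rw [← hm]; abel
    exact this ▸ add_mem hmwH hh
  obtain rfl : j = 0 := hmin.eq_zero_of_lt hv hw hi (hle.trans_lt hmw) hmemw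
  rw [zero_nsmul, add_zero] at hle hmemw
  obtain rfl : a = i := eq_of_nsmul_sub_nsmul_mem hmin.lt_addOrderOf hi <| by
    simpa using sub_mem hmemw hmin.mem
  exact hmv.not_ge hle

theorem infClosedMod_iff (hmin : IsMinimalRelation H v w a b) (hH : ∀ g ∈ H, g⁺ ∈ H)
    (hv : 0 ≤ v) (hw : 0 ≤ w) :
    InfClosedMod (positiveSemigroup H v w) H ↔ 0 ≤ b • w - a • v :=
  ⟨hmin.nonneg_of_infClosedMod hH hv hw, hmin.infClosedMod_of_nonneg hH hv hw⟩

end IsMinimalRelation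

end LatticeGroup

section IntLattice

variable {d n e l f m a b : ℕ}

/-- The subgroup `dℤ ⊕ nℤ` of `ℤ ⊕ ℤ`. -/
def intLattice (d n : ℕ) : AddSubgroup (ℤ × ℤ) :=
  (AddSubgroup.zmultiples (d : ℤ)).prod (AddSubgroup.zmultiples (n : ℤ))

theorem mem_intLattice {x : ℤ × ℤ} : x ∈ intLattice d n ↔ (d : ℤ) ∣ x.1 ∧ (n : ℤ) ∣ x.2 := by
  simp [intLattice, AddSubgroup.mem_prod, Int.mem_zmultiples_iff]

theorem posPart_mem_intLattice {x : ℤ × ℤ} (hx : x ∈ intLattice d n) : x⁺ ∈ intLattice d n := by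
  have dvd_posPart {c z : ℤ} (hz : c ∣ z) : c ∣ z⁺ := by
    rw [posPart_eq_ite]
    split_ifs
    exacts [hz, dvd_zero c]
  rw [mem_intLattice] at hx ⊢
  exact ⟨dvd_posPart hx.1, dvd_posPart hx.2⟩

theorem addOrderOf_mk_intLattice (d n e l : ℕ) :
    addOrderOf (((e : ℤ), (l : ℤ)) : (ℤ × ℤ) ⧸ intLattice d n) =
      addOrderOf (((e : ZMod d), (l : ZMod n)) : ZMod d × ZMod n) := by
  rw [addOrderOf_eq_addOrderOf_iff]
  intro i
  rw [← QuotientAddGroup.mk_nsmul, QuotientAddGroup.eq_zero_iff, mem_intLattice, Prod.ext_iff]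
  simp only [Prod.smul_mk, nsmul_eq_mul, Prod.fst_zero, Prod.snd_zero]
  norm_cast
  simp only [ZMod.natCast_eq_zero_iff]

theorem intLattice_inf_nonneg (d n : ℕ) :
    (intLattice d n).toAddSubmonoid ⊓ .nonneg (ℤ × ℤ) =
      .closure {((d : ℤ), 0), (0, (n : ℤ))} := by
  ext ⟨x, y⟩
  simp only [AddSubmonoid.mem_inf, AddSubgroup.mem_toAddSubmonoid, mem_intLattice,
    AddSubmonoid.mem_nonneg, AddSubmonoid.mem_closure_pair]
  constructor
  · rintro ⟨⟨hdx, hny⟩, hx0, hy0⟩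
    lift x to ℕ using hx0
    lift y to ℕ using hy0
    obtain ⟨p, rfl⟩ := Int.natCast_dvd_natCast.mp hdx
    obtain ⟨q, rfl⟩ := Int.natCast_dvd_natCast.mp hny
    exact ⟨p, q, by simp [mul_comm]⟩
  · rintro ⟨p, q, h⟩
    obtain ⟨rfl, rfl⟩ : p * d = x ∧ q * n = y := by simpa using h
    exact ⟨⟨dvd_mul_left _ _, dvd_mul_left _ _⟩, by positivity, by positivity⟩

theorem nsmul_sub_nsmul_natCast_prod (e l f m a b : ℕ) :
    b • ((f : ℤ), (m : ℤ)) - a • ((e : ℤ), (l : ℤ)) =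
      (-(a : ℤ) * e + b * f, -(a : ℤ) * l + b * m) := by
  ext <;> simp <;> ring

theorem isAdmissibleRelation_intLattice_iff :
    IsAdmissibleRelation (intLattice d n) ((e : ℤ), (l : ℤ)) ((f : ℤ), (m : ℤ)) a b ↔
      0 < b ∧ ∃ g h : ℤ, a < addOrderOf (((e : ZMod d), (l : ZMod n)) : ZMod d × ZMod n) ∧
        -(a : ℤ) * e + b * f = g ∧ -(a : ℤ) * l + b * m = h ∧
        (d : ℤ) ∣ g ∧ (n : ℤ) ∣ h ∧ (0 < g ∨ 0 < h ∨ (g = 0 ∧ h = 0)) := by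
  have hsub := nsmul_sub_nsmul_natCast_prod e l f m a b
  have not_neg_iff (g h : ℤ) : ¬(g, h) < 0 ↔ 0 < g ∨ 0 < h ∨ (g = 0 ∧ h = 0) := by
    simp only [Prod.lt_iff, Prod.fst_zero, Prod.snd_zero]
    omega
  constructor
  · rintro ⟨hb, ha, hmem, hneg⟩
    rw [hsub] at hmem hneg
    obtain ⟨hd, hn⟩ := mem_intLattice.mp hmem
    exact ⟨hb, _, _, addOrderOf_mk_intLattice d n e l ▸ ha, rfl, rfl, hd, hn,
      (not_neg_iff _ _).mp hneg⟩
  · rintro ⟨hb, _, _, ha, rfl, rfl, hd, hn, hneg⟩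
    exact ⟨hb, addOrderOf_mk_intLattice d n e l ▸ ha, hsub ▸ mem_intLattice.mpr ⟨hd, hn⟩,
      hsub ▸ (not_neg_iff _ _).mpr hneg⟩

end IntLattice

section Exponents

/-- The embedding of exponents of monomials in two variables into `ℤ ⊕ ℤ`. -/
noncomputable def exponentHom : (Fin 2 →₀ ℕ) →+ ℤ × ℤ :=
  ((Nat.castAddMonoidHom ℤ).comp (Finsupp.applyAddHom 0)).prod
    ((Nat.castAddMonoidHom ℤ).comp (Finsupp.applyAddHom 1))

theorem exponentHom_apply (s : Fin 2 →₀ ℕ) : exponentHom s = ((s 0 : ℤ), (s 1 : ℤ)) := rfl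

theorem exponentHom_injective : Function.Injective exponentHom := fun s t h => by
  simp only [exponentHom_apply, Prod.mk.injEq, Nat.cast_inj] at h
  ext i
  fin_cases i
  exacts [h.1, h.2]

theorem exponentHom_inf (s t : Fin 2 →₀ ℕ) :
    exponentHom (s ⊓ t) = exponentHom s ⊓ exponentHom t := by
  simp [exponentHom_apply]

open Finsupp (single)

theorem PairSaturated.inf_mem {S : AddSubmonoid (Fin 2 →₀ ℕ)} {d n : ℕ}
    (hS : PairSaturated S (single 0 d) (single 1 n)) (hd : single 0 d ∈ S) (hn : single 1 n ∈ S)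
    {s t : Fin 2 →₀ ℕ} (hs : s ∈ S) (ht : t ∈ S)
    (hst : exponentHom s - exponentHom t ∈ intLattice d n) : s ⊓ t ∈ S := by
  wlog h0 : s 0 ≤ t 0 generalizing s t
  · rw [inf_comm]
    exact this ht hs (by simpa using neg_mem hst) (le_of_not_ge h0)
  rcases le_total (s 1) (t 1) with h1 | h1
  · have hle : s ≤ t := fun i => by fin_cases i <;> assumption
    rwa [inf_eq_left.mpr hle]
  obtain ⟨hdvd0, hdvd1⟩ := mem_intLattice.mp hst
  obtain ⟨p, hp⟩ := (Nat.modEq_iff_dvd' h0).mp (Nat.modEq_iff_dvd.mpr hdvd0).symm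
  obtain ⟨q, hq⟩ := (Nat.modEq_iff_dvd' h1).mp (Nat.modEq_iff_dvd.mpr hdvd1)
  have ht_eq : s ⊓ t + p • single 0 d = t := by
    ext i
    fin_cases i <;> simp [h0, h1, mul_comm p, ← hp]
  have hs_eq : s ⊓ t + q • single 1 n = s := by
    ext i
    fin_cases i <;> simp [h0, h1, mul_comm q, ← hq]
  exact hS.mem_of_add_nsmul_mem hd hn (ht_eq.symm ▸ ht) (hs_eq.symm ▸ hs)

theorem pairSaturated_single_iff_infClosedMod {S : AddSubmonoid (Fin 2 →₀ ℕ)} {d n : ℕ}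
    (hd : single 0 d ∈ S) (hn : single 1 n ∈ S) :
    PairSaturated S (single 0 d) (single 1 n) ↔
      InfClosedMod (S.map exponentHom) (intLattice d n) := by
  constructor
  · rintro hS _ ⟨s, hs, rfl⟩ _ ⟨t, ht, rfl⟩ hst
    exact ⟨s ⊓ t, hS.inf_mem hd hn hs ht hst, exponentHom_inf s t⟩
  · intro hS s hsd hsn
    have hinf : (s + single 0 d) ⊓ (s + single 1 n) = s := by
      ext i
      fin_cases i <;> simp
    have := hS _ (AddSubmonoid.mem_map_of_mem _ hsd) _ (AddSubmonoid.mem_map_of_mem _ hsn) <| by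
      simp [mem_intLattice, exponentHom_apply]
    rwa [← exponentHom_inf, hinf, AddSubmonoid.mem_map_iff_mem exponentHom_injective] at this

/-- The semigroup in `ℕ²` generated by the exponents of `x^d, x^e y^l, x^f y^m, y^n`. -/
noncomputable def exponentSemigroup (d n e l f m : ℕ) : AddSubmonoid (Fin 2 →₀ ℕ) :=
  .closure {single 0 d, single 0 e + single 1 l, single 0 f + single 1 m, single 1 n}

theorem map_exponentHom_exponentSemigroup (d n e l f m : ℕ) :
    (exponentSemigroup d n e l f m).map exponentHom =
      positiveSemigroup (intLattice d n) ((e : ℤ), (l : ℤ)) ((f : ℤ), (m : ℤ)) := by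
  have himage : exponentHom ''
      {single 0 d, single 0 e + single 1 l, single 0 f + single 1 m, single 1 n} =
        {((e : ℤ), (l : ℤ)), ((f : ℤ), (m : ℤ))} ∪ {((d : ℤ), 0), (0, (n : ℤ))} := by
    rw [Set.insert_union, Set.singleton_union]
    simp [Set.image_insert_eq, exponentHom_apply, Set.insert_comm ((d : ℤ), (0 : ℤ))]
  rw [exponentSemigroup, AddMonoidHom.map_mclosure, himage, AddSubmonoid.closure_union,
    positiveSemigroup, intLattice_inf_nonneg]

theorem adjoin_generators_eq_monomialSubalgebra (k : Type*) [CommSemiring k]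
    (d n e l f m : ℕ) :
    Algebra.adjoin k ({X 0 ^ d, X 0 ^ e * X 1 ^ l, X 0 ^ f * X 1 ^ m, X 1 ^ n} :
      Set (MvPolynomial (Fin 2) k)) = monomialSubalgebra k (exponentSemigroup d n e l f m) := by
  rw [exponentSemigroup, ← adjoin_monomial_one_image]
  simp [Set.image_insert_eq, X_pow_eq_monomial, monomial_mul]

theorem stmt_12_general {d n e f l m : ℕ} (hd : 0 < d) (hn : 0 < n) {a2 b2 : ℕ} {g2 h2 : ℤ}
    (hb2pos : 0 < b2)
    (ha2ord : a2 < addOrderOf (((e : ZMod d), (l : ZMod n)) : ZMod d × ZMod n))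
    (hrel2x : -(a2 : ℤ) * e + b2 * f = g2) (hrel2y : -(a2 : ℤ) * l + b2 * m = h2)
    (hdvd2 : (d : ℤ) ∣ g2 ∧ (n : ℤ) ∣ h2) (hsign2 : 0 < g2 ∨ 0 < h2 ∨ (g2 = 0 ∧ h2 = 0))
    (hmin2 : ∀ b' : ℕ, 0 < b' →
      (∃ (a' : ℕ) (g h : ℤ), a' < addOrderOf (((e : ZMod d), (l : ZMod n)) : ZMod d × ZMod n) ∧
        -(a' : ℤ) * e + b' * f = g ∧ -(a' : ℤ) * l + b' * m = h ∧
        (d : ℤ) ∣ g ∧ (n : ℤ) ∣ h ∧ (0 < g ∨ 0 < h ∨ (g = 0 ∧ h = 0))) → b2 ≤ b')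
    {k : Type*} [CommRing k] [Nontrivial k] {R : Subalgebra k (MvPolynomial (Fin 2) k)}
    (hR : R = Algebra.adjoin k
      ({X 0 ^ d, X 0 ^ e * X 1 ^ l, X 0 ^ f * X 1 ^ m, X 1 ^ n} :
        Set (MvPolynomial (Fin 2) k)))
    {xd yn : R} (hxd : (xd : MvPolynomial (Fin 2) k) = X 0 ^ d)
    (hyn : (yn : MvPolynomial (Fin 2) k) = X 1 ^ n) :
    IsRegular R [xd, yn] ↔ 0 ≤ g2 ∧ 0 ≤ h2 := by
  have hmin : IsMinimalRelation (intLattice d n) ((e : ℤ), (l : ℤ)) ((f : ℤ), (m : ℤ)) a2 b2 :=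
    { isAdmissibleRelation_intLattice_iff.mpr
        ⟨hb2pos, g2, h2, ha2ord, hrel2x, hrel2y, hdvd2.1, hdvd2.2, hsign2⟩ with
      le_of_isAdmissible := fun hadm =>
        have ⟨hpos, hrel⟩ := isAdmissibleRelation_intLattice_iff.mp hadm
        hmin2 _ hpos ⟨_, hrel⟩ }
  obtain rfl := hR.trans (adjoin_generators_eq_monomialSubalgebra k d n e l f m)
  have hdS : single 0 d ∈ exponentSemigroup d n e l f m := AddSubmonoid.subset_closure (by simp)
  have hnS : single 1 n ∈ exponentSemigroup d n e l f m := AddSubmonoid.subset_closure (by simp)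
  have hdn : Disjoint (single (0 : Fin 2) d) (single 1 n) := by
    simp [Finsupp.disjoint_iff, Finsupp.support_single, hd.ne', hn.ne']
  rw [isRegular_monomial_pair_iff (by simpa using hd.ne') (by simpa using hn.ne') hdn
      (hxd.trans X_pow_eq_monomial) (hyn.trans X_pow_eq_monomial),
    pairSaturated_single_iff_infClosedMod hdS hnS,
    map_exponentHom_exponentSemigroup,
    hmin.infClosedMod_iff (fun _ => posPart_mem_intLattice) (by simp [Prod.le_def])
      (by simp [Prod.le_def]),
    nsmul_sub_nsmul_natCast_prod, hrel2x, hrel2y]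
  rfl

end Exponents

/-- Let `R = k[x^d, x^e y^ℓ, x^f y^m, y^n]` with `d, n > 0`, `(e,ℓ) ≠ (0,0)`.  Then `R` is
Cohen–Macaulay (equivalently `x^d, y^n` is a regular sequence on `R`) if and only if
`g₂ ≥ 0` and `h₂ ≥ 0`, where `-a₂(e,ℓ) + b₂(f,m) = (g₂,h₂)` is the minimal relation of the
four-generator setup. -/
theorem stmt_12
    (d n e f l m : ℕ) (hd : 0 < d) (hn : 0 < n) (hel : (e, l) ≠ (0, 0))
    (a2 b2 a3 b3 : ℕ) (g2 h2 g3 h3 : ℤ)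
    -- `b₂` is the smallest positive integer admitting a relation
    -- `-a₂(e,ℓ) + b₂(f,m) = (g₂,h₂) ∈ dℤ ⊕ nℤ` with `a₂ < ord((e,ℓ))` and
    -- `g₂ > 0` or `h₂ > 0` or `(g₂,h₂) = (0,0)`.
    (hb2pos : 0 < b2)
    (ha2ord : a2 < addOrderOf (((e : ZMod d), (l : ZMod n)) : ZMod d × ZMod n))
    (hrel2x : -(a2 : ℤ) * e + b2 * f = g2) (hrel2y : -(a2 : ℤ) * l + b2 * m = h2)
    (hdvd2 : (d : ℤ) ∣ g2 ∧ (n : ℤ) ∣ h2)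
    (hsign2 : 0 < g2 ∨ 0 < h2 ∨ (g2 = 0 ∧ h2 = 0))
    (hmin2 : ∀ b' : ℕ, 0 < b' →
      (∃ (a' : ℕ) (g h : ℤ), a' < addOrderOf (((e : ZMod d), (l : ZMod n)) : ZMod d × ZMod n) ∧
        -(a' : ℤ) * e + b' * f = g ∧ -(a' : ℤ) * l + b' * m = h ∧
        (d : ℤ) ∣ g ∧ (n : ℤ) ∣ h ∧ (0 < g ∨ 0 < h ∨ (g = 0 ∧ h = 0))) → b2 ≤ b')
    -- `a₃` is the smallest positive integer admitting a relation
    -- `a₃(e,ℓ) - b₃(f,m) = (g₃,h₃) ∈ dℤ ⊕ nℤ` with `b₃ < ord((f,m))`,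
    -- `g₃, h₃ ≥ 0` not both zero.
    (ha3pos : 0 < a3)
    (hb3ord : b3 < addOrderOf (((f : ZMod d), (m : ZMod n)) : ZMod d × ZMod n))
    (hrel3x : (a3 : ℤ) * e - b3 * f = g3) (hrel3y : (a3 : ℤ) * l - b3 * m = h3)
    (hdvd3 : (d : ℤ) ∣ g3 ∧ (n : ℤ) ∣ h3)
    (hsign3 : 0 ≤ g3 ∧ 0 ≤ h3 ∧ ¬(g3 = 0 ∧ h3 = 0))
    (hmin3 : ∀ a' : ℕ, 0 < a' →
      (∃ (b' : ℕ) (g h : ℤ), b' < addOrderOf (((f : ZMod d), (m : ZMod n)) : ZMod d × ZMod n) ∧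
        (a' : ℤ) * e - b' * f = g ∧ (a' : ℤ) * l - b' * m = h ∧
        (d : ℤ) ∣ g ∧ (n : ℤ) ∣ h ∧ 0 ≤ g ∧ 0 ≤ h ∧ ¬(g = 0 ∧ h = 0)) → a3 ≤ a')
    (k : Type*) [Field k]
    (R : Subalgebra k (MvPolynomial (Fin 2) k))
    (hR : R = Algebra.adjoin k
      ({X 0 ^ d, X 0 ^ e * X 1 ^ l, X 0 ^ f * X 1 ^ m, X 1 ^ n} :
        Set (MvPolynomial (Fin 2) k)))
    (xd yn : R)
    (hxd : (xd : MvPolynomial (Fin 2) k) = X 0 ^ d)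
    (hyn : (yn : MvPolynomial (Fin 2) k) = X 1 ^ n)
    :
    RingTheory.Sequence.IsRegular R [xd, yn] ↔ (0 ≤ g2 ∧ 0 ≤ h2) := by
  exact stmt_12_general hd hn hb2pos ha2ord hrel2x hrel2y hdvd2 hsign2 hmin2 hR hxd hyn
end

section
/- Let d,n > 0 and (e,ℓ) ≠ (0,0) with e,ℓ ≥ 0. Then the ring k[x^d, x^e y^ℓ, y^n] is Cohen–Macaulay. -/
open MvPolynomial

set_option synthInstance.maxHeartbeats 1000000
set_option maxHeartbeats 2000000

/-!
The ring is the monoid algebra of the submonoid `S` of `ℕ²` generated by `p = (d, 0)`, `w = (e, ℓ)`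
and `q = (0, n)`. There `x^d` is a nonzerodivisor, and `x^d ∣ y^n * f` implies `x^d ∣ f` as soon as
every equation `q + m = p + m'` in `S` forces `m ∈ p + S`. Write `m = a p + c w + b q` and
`m' = a' p + c' w + b' q`. If `a > 0` this is clear, and if `b' > 0` then `q` can be cancelled.
If `a = b' = 0`, comparing first coordinates gives `c' < c`, while comparing second coordinates
gives `c < c'`, which is absurd.
-/

open RingTheory.Sequence

section RegularPair

open scoped Pointwise

variable {A B : Type*} [CommRing A] [CommRing B]

lemma isSMulRegular_quotSMulTop_self_iff {x y : A} :
    IsSMulRegular (QuotSMulTop x A) y ↔ ∀ a, x ∣ y * a → x ∣ a := by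
  have mem_smul_top_iff (a : A) : a ∈ x • (⊤ : Submodule A A) ↔ x ∣ a := by
    simp only [Submodule.mem_smul_pointwise_iff_exists, Submodule.mem_top, true_and, smul_eq_mul,
      dvd_def, eq_comm]
  simp only [isSMulRegular_iff_right_eq_zero_of_smul, (Submodule.mkQ_surjective _).forall,
    Submodule.mkQ_apply, ← Submodule.Quotient.mk_smul, Submodule.Quotient.mk_eq_zero,
    mem_smul_top_iff, smul_eq_mul]

lemma isRegular_pair_iff {x y : A} :
    IsRegular A [x, y] ↔
      IsLeftRegular x ∧ (∀ a, x ∣ y * a → x ∣ a) ∧ Ideal.span {x, y} ≠ ⊤ := by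
  rw [isRegular_iff, isWeaklyRegular_cons_iff, isWeaklyRegular_singleton_iff,
    isSMulRegular_quotSMulTop_self_iff, isLeftRegular_iff, and_assoc, ne_comm]
  simp [Ideal.span_insert]

lemma isRegular_map_ringEquiv_iff (φ : A ≃+* B) (rs : List A) :
    IsRegular B (rs.map φ) ↔ IsRegular A rs :=
  (φ.toAddEquiv.isRegular_congr <| List.forall₂_map_right_iff.mpr <|
    List.forall₂_same.mpr fun r _ x => map_mul φ r x).symm

end RegularPair

section Closure

variable {M : Type*}

lemma mem_addSubmonoid_closure_triple [AddCommMonoid M] {p w q m : M} :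
    m ∈ AddSubmonoid.closure {p, w, q} ↔ ∃ a c b : ℕ, a • p + c • w + b • q = m := by
  rw [Set.insert_eq, AddSubmonoid.closure_union]
  simp [AddSubmonoid.mem_sup, AddSubmonoid.mem_closure_singleton, AddSubmonoid.mem_closure_pair,
    add_assoc]

lemma exists_eq_add_of_mem_closure_triple [AddCommMonoid M] [IsCancelAdd M]
    {p w q : M} {f g : M →+ ℕ}
    (hfp : 0 < f p) (hfq : f q = 0) (hgp : g p = 0) (hgq : 0 < g q) {m m' : M}
    (hm : m ∈ AddSubmonoid.closure {p, w, q}) (hm' : m' ∈ AddSubmonoid.closure {p, w, q})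
    (h : q + m = p + m') : ∃ u ∈ AddSubmonoid.closure {p, w, q}, m = p + u := by
  simp only [mem_addSubmonoid_closure_triple] at hm hm' ⊢
  obtain ⟨a, c, b, rfl⟩ := hm
  obtain ⟨a', c', b', rfl⟩ := hm'
  rcases a with _ | a
  · rcases b' with _ | b'
    · have hf : c * f w = f p + a' * f p + c' * f w := by
        simpa [hfq, ← add_assoc] using congrArg f h
      have hg : g q + c * g w + b * g q = c' * g w := by
        simpa [hgp, ← add_assoc] using congrArg g h
      have c'_lt_c : c' < c := lt_of_mul_lt_mul_right (by omega : c' * f w < c * f w) (zero_le)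
      have c_lt_c' : c < c' := lt_of_mul_lt_mul_right (by omega : c * g w < c' * g w) (zero_le)
      exact absurd c_lt_c' c'_lt_c.asymm
    · refine ⟨_, ⟨a', c', b', rfl⟩, add_left_cancel (a := q) (h.trans ?_)⟩
      rw [succ_nsmul]; abel
  · refine ⟨_, ⟨a, c, b, rfl⟩, ?_⟩
    rw [succ_nsmul]; abel

end Closure

section MonoidAlgebra

open AddMonoidAlgebra
open scoped AddMonoidAlgebra

variable {R M : Type*}

lemma of'_dvd_iff [CommSemiring R] [AddCommMonoid M] {s : M} {f : R[M]} :
    of' R M s ∣ f ↔ ∀ m ∈ f.coeff.support, ∃ u, m = s + u := by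
  rw [← Ideal.mem_span_singleton, ← Set.image_singleton, mem_ideal_span_of'_image]
  simp only [Set.mem_singleton_iff, exists_eq_left, add_comm s]

lemma isLeftRegular_of' [Semiring R] [AddCommMonoid M] [IsCancelAdd M] (s : M) :
    IsLeftRegular (of' R M s) :=
  Function.LeftInverse.injective (g := (divOf · s)) (of'_mul_divOf s)

lemma span_of'_image_ne_top [Semiring R] [Nontrivial R] [AddCommMonoid M] {A : Set M}
    (hA : ∀ s ∈ A, ¬ IsAddUnit s) : Ideal.span (of' R M '' A) ≠ ⊤ := by
  rw [Ideal.ne_top_iff_one, mem_ideal_span_of'_image]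
  intro h
  obtain ⟨s, hs, u, hu⟩ := h 0 (by simp [AddMonoidAlgebra.one_def])
  exact hA s hs (.of_add_eq_zero_right u hu.symm)

lemma isRegular_of'_pair [CommRing R] [Nontrivial R] [AddCommMonoid M] [IsCancelAdd M] {s t : M}
    (hs : ¬ IsAddUnit s) (ht : ¬ IsAddUnit t)
    (hst : ∀ a b, t + a = s + b → ∃ u, a = s + u) :
    IsRegular R[M] [of' R M s, of' R M t] := by
  refine isRegular_pair_iff.mpr ⟨isLeftRegular_of' s, fun f hf => ?_, ?_⟩
  · refine of'_dvd_iff.mpr fun a ha => ?_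
    obtain ⟨b, hb⟩ := of'_dvd_iff.mp hf (t + a) <| by
      simpa [of'_apply] using ha
    exact hst a b hb
  · have := span_of'_image_ne_top (R := R) (A := {s, t}) (by simp [hs, ht])
    simpa [Set.image_pair] using this

lemma of'_mem_adjoin_of_mem_closure [CommSemiring R] [AddMonoid M] {A : Set M} {m : M}
    (hm : m ∈ AddSubmonoid.closure A) : of' R M m ∈ Algebra.adjoin R (of' R M '' A) := by
  induction hm using AddSubmonoid.closure_induction with
  | mem a ha => exact Algebra.subset_adjoin ⟨a, ha, rfl⟩
  | zero => exact one_mem _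
  | add a b _ _ iha ihb => simpa [of'_apply, single_mul_single] using mul_mem iha ihb

lemma range_mapDomainAlgHom_closure_subtype [CommSemiring R] [AddMonoid M] (A : Set M) :
    (mapDomainAlgHom R R (AddSubmonoid.closure A).subtype).range =
      Algebra.adjoin R (of' R M '' A) := by
  apply le_antisymm
  · rintro _ ⟨f, rfl⟩
    induction f using AddMonoidAlgebra.induction_linear with
    | zero => exact zero_mem _
    | add f g hf hg => simpa only [map_add] using add_mem hf hg
    | single m r =>
      simpa [of'_apply] using
        Subalgebra.smul_mem _ (of'_mem_adjoin_of_mem_closure (R := R) m.2) r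
  · rw [Algebra.adjoin_le_iff]
    rintro _ ⟨a, ha, rfl⟩
    exact ⟨of' R _ ⟨a, AddSubmonoid.subset_closure ha⟩, by simp [of'_apply]⟩

lemma isRegular_adjoin_of'_image [CommRing R] [AddCommMonoid M] {A : Set M}
    {s t : AddSubmonoid.closure A} (h : IsRegular R[AddSubmonoid.closure A] [of' R _ s, of' R _ t])
    {x y : Algebra.adjoin R (of' R M '' A)} (hx : (x : R[M]) = of' R M s)
    (hy : (y : R[M]) = of' R M t) :
    IsRegular (Algebra.adjoin R (of' R M '' A)) [x, y] := by
  let ι := mapDomainAlgHom R R (AddSubmonoid.closure A).subtype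
  have ι_injective : Function.Injective ι := mapDomain_injective Subtype.val_injective
  let φ := (AlgEquiv.ofInjective ι ι_injective).trans
    (Subalgebra.equivOfEq _ _ (range_mapDomainAlgHom_closure_subtype A))
  have coe_φ (u : AddSubmonoid.closure A) : (φ (of' R _ u) : R[M]) = of' R M u := by
    simp [φ, ι, of'_apply]
  obtain rfl : φ (of' R _ s) = x := Subtype.ext ((coe_φ s).trans hx.symm)
  obtain rfl : φ (of' R _ t) = y := Subtype.ext ((coe_φ t).trans hy.symm)
  exact (isRegular_map_ringEquiv_iff φ.toRingEquiv _).mpr h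

theorem isRegular_adjoin_of'_triple [CommRing R] [Nontrivial R]
    [AddCommMonoid M] [IsCancelAdd M] {p w q : M} {f g : M →+ ℕ}
    (hfp : 0 < f p) (hfq : f q = 0) (hgp : g p = 0) (hgq : 0 < g q)
    {x y : Algebra.adjoin R (of' R M '' {p, w, q})}
    (hx : (x : R[M]) = of' R M p) (hy : (y : R[M]) = of' R M q) :
    IsRegular (Algebra.adjoin R (of' R M '' {p, w, q})) [x, y] := by
  let S := AddSubmonoid.closure {p, w, q}
  have not_isAddUnit (φ : M →+ ℕ) (s : S) (hs : 0 < φ s) : ¬ IsAddUnit s := fun hu =>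
    hs.ne' (isAddUnit_iff_eq_zero.mp (hu.map (φ.comp S.subtype)))
  let p' : S := ⟨p, AddSubmonoid.subset_closure (by simp)⟩
  let q' : S := ⟨q, AddSubmonoid.subset_closure (by simp)⟩
  refine isRegular_adjoin_of'_image (s := p') (t := q') (isRegular_of'_pair
    (not_isAddUnit f p' hfp) (not_isAddUnit g q' hgq) fun m m' h => ?_) hx hy
  obtain ⟨u, hu, hmu⟩ := exists_eq_add_of_mem_closure_triple hfp hfq hgp hgq m.2 m'.2
    (congrArg Subtype.val h)
  exact ⟨⟨u, hu⟩, Subtype.ext hmu⟩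

end MonoidAlgebra

theorem stmt_13_general (k : Type*) [CommRing k] [Nontrivial k] (d n e l : ℕ) (hd : 0 < d)
    (hn : 0 < n) (R : Subalgebra k (MvPolynomial (Fin 2) k))
    (hR : R = Algebra.adjoin k
      ({X 0 ^ d, X 0 ^ e * X 1 ^ l, X 1 ^ n} : Set (MvPolynomial (Fin 2) k)))
    (xd yn : R)
    (hxd : (xd : MvPolynomial (Fin 2) k) = X 0 ^ d)
    (hyn : (yn : MvPolynomial (Fin 2) k) = X 1 ^ n) :
    IsRegular R [xd, yn] := by
  have X_pow_eq_of' (i : Fin 2) (m : ℕ) :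
      (X i ^ m : MvPolynomial (Fin 2) k) = AddMonoidAlgebra.of' k _ (Finsupp.single i m) :=
    X_pow_eq_monomial
  have hgen : ({X 0 ^ d, X 0 ^ e * X 1 ^ l, X 1 ^ n} : Set (MvPolynomial (Fin 2) k)) =
      AddMonoidAlgebra.of' k _ '' {.single 0 d, .single 0 e + .single 1 l, .single 1 n} := by
    simp [Set.image_insert_eq, X_pow_eq_of', AddMonoidAlgebra.of'_apply,
      AddMonoidAlgebra.single_mul_single]
  obtain rfl := hR.trans (congrArg _ hgen)
  exact isRegular_adjoin_of'_triple (f := Finsupp.applyAddHom 0) (g := Finsupp.applyAddHom 1)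
    (by simpa) (by simp) (by simp) (by simpa) (hxd.trans (X_pow_eq_of' 0 d))
    (hyn.trans (X_pow_eq_of' 1 n))

/-- Let `d, n > 0` and `(e,ℓ) ≠ (0,0)`.  Then the ring `k[x^d, x^e y^ℓ, y^n]` is
Cohen–Macaulay; equivalently, `x^d, y^n` is a regular sequence on it. -/
theorem stmt_13 (k : Type*) [Field k] (d n e l : ℕ) (hd : 0 < d) (hn : 0 < n)
    (hel : (e, l) ≠ (0, 0))
    (R : Subalgebra k (MvPolynomial (Fin 2) k))
    (hR : R = Algebra.adjoin k
      ({X 0 ^ d, X 0 ^ e * X 1 ^ l, X 1 ^ n} : Set (MvPolynomial (Fin 2) k)))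
    (xd yn : R)
    (hxd : (xd : MvPolynomial (Fin 2) k) = X 0 ^ d)
    (hyn : (yn : MvPolynomial (Fin 2) k) = X 1 ^ n) :
    RingTheory.Sequence.IsRegular R [xd, yn] :=
  stmt_13_general k d n e l hd hn R hR xd yn hxd hyn
end
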